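/- arXiv:1911.00785 — 4 statements merged into one kernel-verified Lean document; each statement's English description precedes it below -/
import Mathlib

section
/- If an action of a countably infinite group G on a compact metrizable space X by homeomorphisms has the pseudo-orbit tracing property, then it has the uniform strong topological Markov property. -/
open Pointwise

/-- Supremum over `g ∈ K` of `ρ (g • x) (g • y)`. -/
noncomputable def supOf {G X : Type*} [SMul G X] (ρ : X → X → ℝ) (K : Set G) (x y : X) : ℝ :=
  ⨆ g : K, ρ ((g : G) • x) ((g : G) • y)

/-- `d_K(x,y) = sup_{g ∈ K} d(g x, g y)`. -/
noncomputable def supD {G X : Type*} [SMul G X] [PseudoMetricSpace X] (K : Set G) (x y : X) : ℝ :=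
  supOf dist K x y

/-- `B` is an `(ε,δ)`-memory set for `A`. -/
def IsMemorySet (G X : Type*) [SMul G X] [PseudoMetricSpace X] (ε δ : ℝ)
    (A B : Finset G) : Prop :=
  (A : Set G) ⊆ (B : Set G) ∧
    ∀ x y : X, supD ((B : Set G) \ (A : Set G)) x y ≤ δ →
      ∃ z : X, supD (B : Set G) x z ≤ ε ∧ supD (Set.univ \ (A : Set G)) y z ≤ ε

/-- The topological Markov property. -/
def TMP (G X : Type*) [SMul G X] [PseudoMetricSpace X] : Prop :=
  ∀ ε > (0 : ℝ), ∃ δ > (0 : ℝ), ∀ A : Finset G, ∃ B : Finset G, IsMemorySet G X ε δ A B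

/-- The strong topological Markov property. -/
def StrongTMP (G X : Type*) [Group G] [DecidableEq G] [MulAction G X]
    [PseudoMetricSpace X] : Prop :=
  ∀ ε > (0 : ℝ), ∃ δ > (0 : ℝ), ∃ F : Finset G, (1 : G) ∈ F ∧
    ∀ A : Finset G, IsMemorySet G X ε δ A (F * A)

/-- `V` is `B`-separated. -/
def Separated {G : Type*} [Mul G] (B V : Set G) : Prop :=
  ∀ v₁ ∈ V, ∀ v₂ ∈ V, v₁ ≠ v₂ → Disjoint (B * ({v₁} : Set G)) (B * ({v₂} : Set G))

/-- `B` is a uniform `(ε,δ)`-memory set for `A`. -/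
def IsUniformMemorySet (G X : Type*) [Group G] [MulAction G X] [PseudoMetricSpace X]
    (ε δ : ℝ) (A B : Finset G) : Prop :=
  IsMemorySet G X ε δ A B ∧
    ∀ V : Finset G, Separated (B : Set G) (V : Set G) →
      ∀ (xv : G → X) (y : X),
        (∀ v ∈ V, supD (((B : Set G) \ (A : Set G)) * ({v} : Set G)) (xv v) y ≤ δ) →
        ∃ z : X, (∀ v ∈ V, supD ((B : Set G) * ({v} : Set G)) z (xv v) ≤ ε) ∧
          supD (Set.univ \ ((A : Set G) * (V : Set G))) z y ≤ ε

/-- The uniform topological Markov property. -/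
def UniformTMP (G X : Type*) [Group G] [MulAction G X] [PseudoMetricSpace X] : Prop :=
  ∀ ε > (0 : ℝ), ∃ δ > (0 : ℝ), ∀ A : Finset G, ∃ B : Finset G,
    IsUniformMemorySet G X ε δ A B

/-- The uniform strong topological Markov property. -/
def UniformStrongTMP (G X : Type*) [Group G] [DecidableEq G] [MulAction G X]
    [PseudoMetricSpace X] : Prop :=
  ∀ ε > (0 : ℝ), ∃ δ > (0 : ℝ), ∃ F : Finset G, (1 : G) ∈ F ∧
    ∀ A : Finset G, IsUniformMemorySet G X ε δ A (F * A)

/-- Expansivity of the action. -/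
def Expansive (G X : Type*) [SMul G X] [PseudoMetricSpace X] : Prop :=
  ∃ c > (0 : ℝ), ∀ x y : X, x ≠ y → ∃ g : G, dist (g • x) (g • y) > c

/-- `(x,y)` is an asymptotic pair. -/
def Asymptotic (G : Type*) {X : Type*} [SMul G X] [PseudoMetricSpace X] (x y : X) : Prop :=
  ∀ ε > (0 : ℝ), ∃ F : Finset G, ∀ g ∉ F, dist (g • x) (g • y) ≤ ε

/-- `(S,δ)` pseudo-orbit. -/
def IsPseudoOrbit {G X : Type*} [Mul G] [SMul G X] [PseudoMetricSpace X]
    (S : Finset G) (δ : ℝ) (w : G → X) : Prop :=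
  ∀ s ∈ S, ∀ g : G, dist (s • w g) (w (s * g)) < δ

/-- `w` is `ε`-traced by `x`. -/
def Traces {G X : Type*} [SMul G X] [PseudoMetricSpace X] (ε : ℝ) (x : X) (w : G → X) : Prop :=
  ∀ g : G, dist (g • x) (w g) ≤ ε

/-- Pseudo-orbit tracing property. -/
def POTP (G X : Type*) [Mul G] [SMul G X] [PseudoMetricSpace X] : Prop :=
  ∀ ε > (0 : ℝ), ∃ δ > (0 : ℝ), ∃ S : Finset G, ∀ w : G → X,
    IsPseudoOrbit S δ w → ∃ x : X, Traces ε x w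

/-- `J` is an independence set for the tuple `U`. -/
def IndepSet {G X : Type*} [SMul G X] {n : ℕ} (U : Fin n → Set X) (J : Set G) : Prop :=
  ∀ I : Finset G, (I : Set G) ⊆ J → I.Nonempty → ∀ φ : G → Fin n,
    (⋂ s ∈ I, (fun x : X => s • x) ⁻¹' U (φ s)).Nonempty

/-- The tuple `U` has positive independence density. -/
def PosIndepDensity (G : Type*) {X : Type*} [SMul G X] {n : ℕ} (U : Fin n → Set X) : Prop :=
  ∃ q > (0 : ℝ), ∀ F : Finset G, ∃ J : Finset G, J ⊆ F ∧
    q * (F.card : ℝ) ≤ (J.card : ℝ) ∧ IndepSet U (J : Set G)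

/-- Orbit IE-tuple. -/
def IETuple (G : Type*) {X : Type*} [SMul G X] [TopologicalSpace X] {n : ℕ}
    (x : Fin n → X) : Prop :=
  ∀ U : Fin n → Set X, (∀ i, IsOpen (U i)) → (∀ i, x i ∈ U i) → PosIndepDensity G U

/-- Minimality of the action. -/
def MinimalAction (G X : Type*) [SMul G X] [TopologicalSpace X] : Prop :=
  ∀ Y : Set X, IsClosed Y → (∀ g : G, ∀ y ∈ Y, g • y ∈ Y) → Y.Nonempty → Y = Set.univ

/-- Følner sequence. -/
def FolnerSeq (G : Type*) [Group G] [DecidableEq G] (F : ℕ → Finset G) : Prop :=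
  (∀ n, (F n).Nonempty) ∧
    ∀ K : Finset G, Filter.Tendsto
      (fun n => ((symmDiff (K * F n) (F n)).card : ℝ) / ((F n).card : ℝ))
      Filter.atTop (nhds 0)

/-!
Choose `S ∋ 1` and `δ` from the tracing property for `ε / 2`, and glue along the intermediate set
`T = S⁻¹ * A`, which lies between `A` and `B = S / S * A = S * T`: follow the orbit of `x v` on
`T * {v}` and that of `y` off `T * V`. The resulting family stays close to the orbit of `x v` on
all of `B * {v}` and to the orbit of `y` on all of `(A * V)ᶜ`. Since `S * T ⊆ B` and
`S⁻¹ * A ⊆ T`, multiplying by `s ∈ S` leads from `T * {v}` into `B * {v}` and from `(T * V)ᶜ` into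
`(A * V)ᶜ`, so these two estimates show that the family is a pseudo-orbit; a point tracing it is
the point sought.
-/

section SupD

variable {G X : Type*} [SMul G X] [PseudoMetricSpace X]

-- On an unbounded space this fails: `⨆` of an unbounded family of reals is `0`.
theorem supD_le_iff [BoundedSpace X] {K : Set G} {x y : X} {ε : ℝ} (hε : 0 ≤ ε) :
    supD K x y ≤ ε ↔ ∀ g ∈ K, dist (g • x) (g • y) ≤ ε := by
  have hbdd : BddAbove (Set.range fun g : K => dist ((g : G) • x) ((g : G) • y)) := by
    refine ⟨Metric.diam (Set.univ : Set X), ?_⟩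
    rintro _ ⟨g, rfl⟩
    exact Metric.dist_le_diam_of_mem BoundedSpace.bounded_univ (Set.mem_univ _) (Set.mem_univ _)
  exact ⟨fun h g hg => (le_ciSup hbdd ⟨g, hg⟩).trans h, fun h => Real.iSup_le (fun g => h g g.2) hε⟩

theorem supD_comm (K : Set G) (x y : X) : supD K x y = supD K y x := by
  simp only [supD, supOf, dist_comm]

end SupD

section Separated

variable {G : Type*} [Mul G] {B T V : Set G}

theorem Separated.mono_left (hTB : T ⊆ B) (hV : Separated B V) : Separated T V :=
  fun v₁ h₁ v₂ h₂ hne =>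
    (hV v₁ h₁ v₂ h₂ hne).mono (Set.mul_subset_mul_right hTB) (Set.mul_subset_mul_right hTB)

theorem Separated.eq_of_mem (hV : Separated B V) {g v₁ v₂ : G} (h₁ : v₁ ∈ V) (h₂ : v₂ ∈ V)
    (hg₁ : g ∈ B * {v₁}) (hg₂ : g ∈ B * {v₂}) : v₁ = v₂ :=
  by_contra fun hne => Set.disjoint_left.1 (hV v₁ h₁ v₂ h₂ hne) hg₁ hg₂

theorem separated_singleton (B : Set G) (v : G) : Separated B {v} := by
  rintro v₁ rfl v₂ rfl hne
  exact (hne rfl).elim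

theorem mem_mul_iff_exists_mem_mul_singleton {g : G} :
    g ∈ T * V ↔ ∃ v ∈ V, g ∈ T * {v} := by
  rw [← Set.iUnion_mul_right_image]
  simp only [Set.mem_iUnion₂, Set.mul_singleton, exists_prop]

end Separated

section Splice

variable {G X : Type*}

open Classical in
/-- The point whose orbit the glued family follows at `g`: it is `x v` if `g ∈ T * {v}` for some
`v ∈ V`, and `y` if `g ∉ T * V`. The choice of `v` is meaningful only if `V` is `T`-separated. -/
noncomputable def splice [Mul G] (T V : Set G) (x : G → X) (y : X) (g : G) : X :=
  if h : ∃ v ∈ V, g ∈ T * {v} then x h.choose else y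

theorem splice_of_mem [Mul G] {T V : Set G} (hV : Separated T V) (x : G → X) (y : X) {v g : G}
    (hv : v ∈ V) (hg : g ∈ T * {v}) : splice T V x y g = x v := by
  have h : ∃ v ∈ V, g ∈ T * {v} := ⟨v, hv, hg⟩
  rw [splice, dif_pos h, hV.eq_of_mem h.choose_spec.1 hv h.choose_spec.2 hg]

theorem splice_of_notMem [Mul G] {T V : Set G} (x : G → X) (y : X) {g : G} (hg : g ∉ T * V) :
    splice T V x y g = y :=
  dif_neg fun h => hg (mem_mul_iff_exists_mem_mul_singleton.2 h)

variable [PseudoMetricSpace X] {A B T V : Set G} {x : G → X} {y : X} {η : ℝ}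

theorem dist_smul_splice_le_of_mem [Mul G] [SMul G X] (hη : 0 ≤ η) (hAT : A ⊆ T) (hTB : T ⊆ B)
    (hV : Separated B V)
    (hxy : ∀ v ∈ V, ∀ g ∈ (B \ A) * {v}, dist (g • x v) (g • y) ≤ η)
    {v g : G} (hv : v ∈ V) (hg : g ∈ B * {v}) :
    dist (g • splice T V x y g) (g • x v) ≤ η := by
  by_cases hgT : g ∈ T * V
  · obtain ⟨u, hu, hgu⟩ := mem_mul_iff_exists_mem_mul_singleton.1 hgT
    obtain rfl : u = v := hV.eq_of_mem hu hv (Set.mul_subset_mul_right hTB hgu) hg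
    rwa [splice_of_mem (hV.mono_left hTB) x y hv hgu, dist_self]
  · rw [splice_of_notMem x y hgT, dist_comm]
    obtain ⟨b, hb, _, rfl, rfl⟩ := hg
    exact hxy _ hv _ (Set.mul_mem_mul ⟨hb, fun ha => hgT (Set.mul_mem_mul (hAT ha) hv)⟩ rfl)

theorem dist_smul_splice_le_of_notMem [Mul G] [SMul G X] (hη : 0 ≤ η) (hTB : T ⊆ B)
    (hV : Separated B V)
    (hxy : ∀ v ∈ V, ∀ g ∈ (B \ A) * {v}, dist (g • x v) (g • y) ≤ η)
    {g : G} (hg : g ∉ A * V) :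
    dist (g • splice T V x y g) (g • y) ≤ η := by
  by_cases hgT : g ∈ T * V
  · obtain ⟨v, hv, hgv⟩ := mem_mul_iff_exists_mem_mul_singleton.1 hgT
    rw [splice_of_mem (hV.mono_left hTB) x y hv hgv]
    obtain ⟨t, ht, _, rfl, rfl⟩ := hgv
    exact hxy _ hv _ (Set.mul_mem_mul ⟨hTB ht, fun ha => hg (Set.mul_mem_mul ha hv)⟩ rfl)
  · rwa [splice_of_notMem x y hgT, dist_self]

theorem isPseudoOrbit_smul_splice [Group G] [MulAction G X] {S : Finset G} {δ : ℝ}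
    (hη : 0 ≤ η) (hηδ : η < δ) (hAT : A ⊆ T) (hTB : T ⊆ B) (hST : (S : Set G) * T ⊆ B)
    (hSA : (S : Set G)⁻¹ * A ⊆ T) (hV : Separated B V)
    (hxy : ∀ v ∈ V, ∀ g ∈ (B \ A) * {v}, dist (g • x v) (g • y) ≤ η) :
    IsPseudoOrbit S δ fun g => g • splice T V x y g := by
  intro s hs g
  rw [← mul_smul, dist_comm]
  refine lt_of_le_of_lt ?_ hηδ
  by_cases hgT : g ∈ T * V
  · obtain ⟨v, hv, hgv⟩ := mem_mul_iff_exists_mem_mul_singleton.1 hgT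
    have hsg : s * g ∈ B * {v} := by
      refine Set.mul_subset_mul_right hST ?_
      rw [mul_assoc]
      exact Set.mul_mem_mul hs hgv
    rw [splice_of_mem (hV.mono_left hTB) x y hv hgv]
    exact dist_smul_splice_le_of_mem hη hAT hTB hV hxy hv hsg
  · have hsg : s * g ∉ A * V := by
      refine fun h => hgT (Set.mul_subset_mul_right hSA ?_)
      rw [mul_assoc, ← inv_mul_cancel_left s g]
      exact Set.mul_mem_mul (Set.inv_mem_inv.2 hs) h
    rw [splice_of_notMem x y hgT]
    exact dist_smul_splice_le_of_notMem hη hTB hV hxy hsg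

end Splice

section Tracing

theorem IsPseudoOrbit.mono {G X : Type*} [Mul G] [SMul G X] [PseudoMetricSpace X]
    {S S' : Finset G} {δ : ℝ} {w : G → X} (hSS' : S ⊆ S') (hw : IsPseudoOrbit S' δ w) :
    IsPseudoOrbit S δ w :=
  fun s hs => hw s (hSS' hs)

theorem POTP.exists_one_mem {G X : Type*} [MulOneClass G] [SMul G X] [PseudoMetricSpace X]
    (h : POTP G X) {ε : ℝ} (hε : 0 < ε) :
    ∃ δ > 0, ∃ S : Finset G, 1 ∈ S ∧
      ∀ w : G → X, IsPseudoOrbit S δ w → ∃ x : X, Traces ε x w := by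
  classical
  obtain ⟨δ, hδ, S, hS⟩ := h ε hε
  exact ⟨δ, hδ, insert 1 S, Finset.mem_insert_self 1 S,
    fun w hw => hS w (hw.mono (Finset.subset_insert 1 S))⟩

variable {G X : Type*} [Group G] [PseudoMetricSpace X] [MulAction G X]

theorem exists_gluing_of_traces {S : Finset G} {ρ η δ : ℝ} (hS₁ : 1 ∈ S)
    (hS : ∀ w : G → X, IsPseudoOrbit S δ w → ∃ z : X, Traces ρ z w) (hη : 0 ≤ η) (hηδ : η < δ)
    {A V : Set G} (hV : Separated ((S / S : Set G) * A) V) {x : G → X} {y : X}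
    (hxy : ∀ v ∈ V, ∀ g ∈ (((S / S : Set G) * A) \ A) * {v}, dist (g • x v) (g • y) ≤ η) :
    ∃ z : X, (∀ v ∈ V, ∀ g ∈ (S / S : Set G) * A * {v}, dist (g • z) (g • x v) ≤ ρ + η) ∧
      ∀ g ∉ A * V, dist (g • z) (g • y) ≤ ρ + η := by
  have hST : (S : Set G) * ((S : Set G)⁻¹ * A) ⊆ (S / S : Set G) * A := by
    rw [div_eq_mul_inv, mul_assoc]
  have hAT : A ⊆ (S : Set G)⁻¹ * A := Set.subset_mul_right A (by simpa using hS₁)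
  have hTB : (S : Set G)⁻¹ * A ⊆ (S / S : Set G) * A := (Set.subset_mul_right _ hS₁).trans hST
  obtain ⟨z, hz⟩ := hS _ (isPseudoOrbit_smul_splice hη hηδ hAT hTB hST subset_rfl hV hxy)
  refine ⟨z, fun v hv g hg => ?_, fun g hg => ?_⟩
  · exact (dist_triangle _ _ _).trans
      (add_le_add (hz g) (dist_smul_splice_le_of_mem hη hAT hTB hV hxy hv hg))
  · exact (dist_triangle _ _ _).trans
      (add_le_add (hz g) (dist_smul_splice_le_of_notMem hη hTB hV hxy hg))

variable [DecidableEq G] [BoundedSpace X] {S : Finset G} {ε ρ η δ : ℝ}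

theorem isMemorySet_of_traces (hS₁ : 1 ∈ S)
    (hS : ∀ w : G → X, IsPseudoOrbit S δ w → ∃ z : X, Traces ρ z w)
    (hη : 0 ≤ η) (hηδ : η < δ) (hε : 0 ≤ ε) (hρηε : ρ + η ≤ ε) (A : Finset G) :
    IsMemorySet G X ε η A (S / S * A) := by
  have hF : (1 : G) ∈ S / S := Finset.Nonempty.one_mem_div ⟨1, hS₁⟩
  refine ⟨Finset.coe_subset.2 (Finset.subset_mul_right A hF), fun x y hxy => ?_⟩
  rw [supD_le_iff hη] at hxy
  obtain ⟨z, hzx, hzy⟩ := exists_gluing_of_traces (A := A) hS₁ hS hη hηδ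
    (separated_singleton _ 1) (x := fun _ => x) (y := y) (by simpa using hxy)
  refine ⟨z, ?_, ?_⟩
  · rw [supD_comm, supD_le_iff hε]
    intro g hg
    exact (hzx 1 rfl g (by simpa using hg)).trans hρηε
  · rw [supD_comm, supD_le_iff hε]
    intro g hg
    exact (hzy g (by simpa using hg)).trans hρηε

theorem isUniformMemorySet_of_traces (hS₁ : 1 ∈ S)
    (hS : ∀ w : G → X, IsPseudoOrbit S δ w → ∃ z : X, Traces ρ z w)
    (hη : 0 ≤ η) (hηδ : η < δ) (hε : 0 ≤ ε) (hρηε : ρ + η ≤ ε) (A : Finset G) :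
    IsUniformMemorySet G X ε η A (S / S * A) := by
  refine ⟨isMemorySet_of_traces hS₁ hS hη hηδ hε hρηε A, fun V hV x y hxy => ?_⟩
  simp only [supD_le_iff hη, supD_le_iff hε, Finset.coe_mul, Finset.coe_div] at hV hxy ⊢
  obtain ⟨z, hzx, hzy⟩ := exists_gluing_of_traces hS₁ hS hη hηδ hV hxy
  exact ⟨z, fun v hv g hg => (hzx v hv g hg).trans hρηε, fun g hg => (hzy g hg.2).trans hρηε⟩

end Tracing

theorem stmt2_general (G X : Type*) [Group G] [DecidableEq G] [PseudoMetricSpace X]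
    [BoundedSpace X] [MulAction G X] (hpotp : POTP G X) :
    UniformStrongTMP G X := by
  intro ε hε
  obtain ⟨δ, hδ, S, hS₁, hS⟩ := hpotp.exists_one_mem (half_pos hε)
  have hη : 0 < min (δ / 2) (ε / 2) := lt_min (half_pos hδ) (half_pos hε)
  have hηδ : min (δ / 2) (ε / 2) < δ := (min_le_left _ _).trans_lt (half_lt_self hδ)
  have hηε : ε / 2 + min (δ / 2) (ε / 2) ≤ ε := by linarith [min_le_right (δ / 2) (ε / 2)]
  exact ⟨min (δ / 2) (ε / 2), hη, S / S, Finset.Nonempty.one_mem_div ⟨1, hS₁⟩,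
    isUniformMemorySet_of_traces hS₁ hS hη.le hηδ hε.le hηε⟩

/-- If an action of a countably infinite group `G` on a compact metrizable
space `X` by homeomorphisms has the pseudo-orbit tracing property, then it has the uniform
strong topological Markov property. -/
theorem stmt2 (G X : Type*) [Group G] [Countable G] [Infinite G] [DecidableEq G]
    [MetricSpace X] [CompactSpace X] [MulAction G X]
    (hcont : ∀ g : G, Continuous fun x : X => g • x)
    (hpotp : POTP G X) :
    UniformStrongTMP G X := by
  exact stmt2_general G X hpotp
end

section
/- Let ρ be a dynamically generating continuous pseudometric on X for an action G ↷ X. Then: (1) G ↷ X has the TMP if and only if for every ε > 0 there is δ > 0 such that for every finite A ⊆ G there is a finite B ⊆ G containing A so that for all x,y ∈ X with ρ_{B∖A}(x,y) ≤ δ there is z ∈ X with ρ_B(z,x) ≤ ε and ρ_{G∖A}(z,y) ≤ ε; (2) G ↷ X has the strong TMP if and only if for every ε > 0 there are δ > 0 and a finite F ⊆ G containing the identity such that for every finite A ⊆ G and all x,y ∈ X with ρ_{FA∖A}(x,y) ≤ δ there is z ∈ X with ρ_{FA}(z,x) ≤ ε and ρ_{G∖A}(z,y) ≤ ε. -/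
open Pointwise

/-!
A continuous generating pseudometric and the metric control each other: by compactness, one of them
is small at a pair of points as soon as the other is small along a finite window `K ⊆ G` of its
orbit. We may take `K` symmetric with `1 ∈ K`. To find a memory set for `A` with respect to one
pseudometric `τ`, take a memory set `B` for the thickening `K * A` with respect to the other one,
`σ`. The point `z` it provides is `τ`-close to `x` on `K ^ 2 * A` and to `y` off `K ^ 2 * A`, and
`K * B ∪ K ^ 4 * A` is large enough to compare `x` with `y` at the remaining places. For
`B = F * (K * A)` this set is `(K * F * K ∪ K ^ 4) * A`, which settles the strong property.
-/

section OrbitClose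

variable {G X : Type*} {σ τ : X → X → ℝ} {K L : Set G} {ε ε' : ℝ} {x y z : X}

/-- The relation `σ_K(x, y) ≤ ε`, stated pointwise so that it does not depend on the junk value of
an unbounded supremum. -/
def OrbitClose [SMul G X] (σ : X → X → ℝ) (K : Set G) (ε : ℝ) (x y : X) : Prop :=
  ∀ g ∈ K, σ (g • x) (g • y) ≤ ε

namespace OrbitClose

section SMul

variable [SMul G X]

theorem mono (h : OrbitClose σ L ε x y) (hKL : K ⊆ L) (hε : ε ≤ ε') : OrbitClose σ K ε' x y :=
  fun g hg => (h g (hKL hg)).trans hε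

theorem union (hK : OrbitClose σ K ε x y) (hL : OrbitClose σ L ε x y) :
    OrbitClose σ (K ∪ L) ε x y :=
  fun g hg => hg.elim (hK g) (hL g)

theorem symm (hσ_symm : ∀ x y, σ x y = σ y x) (h : OrbitClose σ K ε x y) :
    OrbitClose σ K ε y x :=
  fun g hg => (hσ_symm _ _).trans_le (h g hg)

theorem trans (hσ_tri : ∀ x y z, σ x z ≤ σ x y + σ y z) (hxy : OrbitClose σ K ε x y)
    (hyz : OrbitClose σ K ε' y z) : OrbitClose σ K (ε + ε') x z :=
  fun g hg => (hσ_tri _ (g • y) _).trans (add_le_add (hxy g hg) (hyz g hg))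

theorem glue (hσ_symm : ∀ x y, σ x y = σ y x) (hσ_tri : ∀ x y z, σ x z ≤ σ x y + σ y z)
    {A B N : Set G} (hε : 0 ≤ ε) (hAN : A ⊆ N) (hNB : N ⊆ B) (hxy : OrbitClose σ (B \ A) ε x y)
    (hxz : OrbitClose σ N ε x z) (hyz : OrbitClose σ Nᶜ ε y z) :
    OrbitClose σ B (ε + ε) x z ∧ OrbitClose σ Aᶜ (ε + ε) y z := by
  have hε_add : ε ≤ ε + ε := le_add_of_nonneg_left hε
  constructor
  · have hxz_off : OrbitClose σ (B \ N) (ε + ε) x z :=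
      (hxy.mono (Set.sdiff_subset_sdiff_right hAN) le_rfl).trans hσ_tri
        (hyz.mono (fun _ hg => hg.2) le_rfl)
    exact ((hxz.mono subset_rfl hε_add).union hxz_off).mono
      (Set.union_sdiff_cancel hNB).superset le_rfl
  · have hyz_near : OrbitClose σ (N \ A) (ε + ε) y z :=
      ((hxy.mono (Set.sdiff_subset_sdiff_left hNB) le_rfl).symm hσ_symm).trans hσ_tri
        (hxz.mono Set.sdiff_subset le_rfl)
    refine ((hyz.mono subset_rfl hε_add).union hyz_near).mono (fun g hg => ?_) le_rfl
    exact (Classical.em (g ∈ N)).symm.imp_right fun hgN => ⟨hgN, hg⟩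

end SMul

theorem of_mul [Semigroup G] [SemigroupAction G X]
    (hστ : ∀ x y, OrbitClose σ K ε x y → τ x y ≤ ε') (h : OrbitClose σ (K * L) ε x y) :
    OrbitClose τ L ε' x y :=
  fun g hg => hστ _ _ fun k hk => by
    simpa only [mul_smul] using h (k * g) (Set.mul_mem_mul hk hg)

end OrbitClose

theorem supOf_comm [SMul G X] (hσ_symm : ∀ x y, σ x y = σ y x) (K : Set G) (x y : X) :
    supOf σ K x y = supOf σ K y x :=
  iSup_congr fun _ => hσ_symm _ _

theorem supOf_le_iff_orbitClose [SMul G X] [TopologicalSpace X] [CompactSpace X]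
    (hσ : Continuous fun p : X × X => σ p.1 p.2) (hε : 0 ≤ ε) :
    supOf σ K x y ≤ ε ↔ OrbitClose σ K ε x y := by
  refine ⟨fun h g hg => ?_, fun h => Real.iSup_le (fun g => h g g.2) hε⟩
  have bdd : BddAbove (Set.range fun g : K => σ ((g : G) • x) ((g : G) • y)) :=
    (isCompact_range hσ).bddAbove.mono <|
      Set.range_subset_iff.2 fun g =>
        Set.mem_range_self (f := fun p : X × X => σ p.1 p.2) ((g : G) • x, (g : G) • y)
  exact (le_ciSup bdd ⟨g, hg⟩).trans h

end OrbitClose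

section OrbitDominates

variable {X : Type*} {σ τ : X → X → ℝ}

/-- `σ` dominates `τ` along orbits: `τ` is small as soon as `σ` is small on a finite piece of the
orbit. This is uniform continuity of `τ` with respect to the pseudometrics `σ_S`, `S ⊆ G` finite. -/
def OrbitDominates (G : Type*) {X : Type*} [SMul G X] (σ τ : X → X → ℝ) : Prop :=
  ∀ ε > (0 : ℝ), ∃ δ > (0 : ℝ), ∃ S : Finset G, ∀ x y, OrbitClose σ (S : Set G) δ x y → τ x y ≤ ε

theorem orbitDominates_of_continuous {G : Type*} [SMul G X] [TopologicalSpace X] [CompactSpace X]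
    [ContinuousConstSMul G X] (hσ : Continuous fun p : X × X => σ p.1 p.2)
    (hτ : Continuous fun p : X × X => τ p.1 p.2)
    (hστ : ∀ x y, 0 < τ x y → ∃ s : G, 0 < σ (s • x) (s • y)) : OrbitDominates G σ τ := by
  classical
  intro ε hε
  let U : Finset G × ℕ → Set (X × X) := fun i =>
    ⋃ s ∈ i.1, {p | 1 / ((i.2 : ℝ) + 1) < σ (s • p.1) (s • p.2)}
  have U_open : ∀ i, IsOpen (U i) := fun i =>
    isOpen_biUnion fun s _ => isOpen_lt continuous_const <|
      hσ.comp ((continuous_fst.const_smul s).prodMk (continuous_snd.const_smul s))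
  have U_mono : Monotone U := by
    rintro i j ⟨hS, hn⟩
    exact Set.biUnion_mono hS fun s _ =>
      Set.ofPred_subset_ofPred.2 fun p => (Nat.one_div_le_one_div hn).trans_lt
  have U_cover : {p : X × X | ε ≤ τ p.1 p.2} ⊆ ⋃ i, U i := by
    rintro ⟨x, y⟩ hp
    obtain ⟨s, hs⟩ := hστ x y (hε.trans_le hp)
    obtain ⟨n, hn⟩ := exists_nat_one_div_lt hs
    exact Set.mem_iUnion.2
      ⟨({s}, n), Set.mem_iUnion₂.2 ⟨s, Finset.mem_singleton_self s, hn⟩⟩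
  obtain ⟨⟨S, n⟩, hSn⟩ := (isClosed_le continuous_const hτ).isCompact.elim_directed_cover
    U U_open U_cover U_mono.directed_le
  refine ⟨1 / ((n : ℝ) + 1), Nat.one_div_pos_of_nat, S, fun x y h => ?_⟩
  by_contra! hlt
  obtain ⟨s, hs, hs_lt⟩ := Set.mem_iUnion₂.1 (hSn (a := (x, y)) hlt.le)
  exact (h s hs).not_gt hs_lt

end OrbitDominates

section MemorySet

variable {G X : Type*} {σ τ : X → X → ℝ} {A B : Set G} {ε δ : ℝ}

/-- `B` is an `(ε, δ)`-memory set for `A` with respect to an arbitrary function `σ` in place of the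
metric. -/
def IsMemorySetFor [SMul G X] (σ : X → X → ℝ) (ε δ : ℝ) (A B : Set G) : Prop :=
  A ⊆ B ∧ ∀ x y : X, OrbitClose σ (B \ A) δ x y →
    ∃ z, OrbitClose σ B ε x z ∧ OrbitClose σ Aᶜ ε y z

theorem isMemorySetFor_iff_supOf [SMul G X] [TopologicalSpace X] [CompactSpace X]
    (hσ : Continuous fun p : X × X => σ p.1 p.2) (hε : 0 ≤ ε) (hδ : 0 ≤ δ) :
    IsMemorySetFor σ ε δ A B ↔ A ⊆ B ∧ ∀ x y : X, supOf σ (B \ A) x y ≤ δ →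
      ∃ z, supOf σ B x z ≤ ε ∧ supOf σ (Set.univ \ A) y z ≤ ε := by
  simp only [IsMemorySetFor, supOf_le_iff_orbitClose hσ hε, supOf_le_iff_orbitClose hσ hδ,
    Set.compl_eq_univ_sdiff]

theorem isMemorySetFor_iff_supOf_comm [SMul G X] [TopologicalSpace X] [CompactSpace X]
    (hσ : Continuous fun p : X × X => σ p.1 p.2) (hσ_symm : ∀ x y, σ x y = σ y x)
    (hε : 0 ≤ ε) (hδ : 0 ≤ δ) :
    IsMemorySetFor σ ε δ A B ↔ A ⊆ B ∧ ∀ x y : X, supOf σ (B \ A) x y ≤ δ →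
      ∃ z, supOf σ B z x ≤ ε ∧ supOf σ (Set.univ \ A) z y ≤ ε := by
  rw [isMemorySetFor_iff_supOf hσ hε hδ]
  refine and_congr_right fun _ => forall₂_congr fun x y => imp_congr_right fun _ =>
    exists_congr fun z => ?_
  rw [supOf_comm hσ_symm B x z, supOf_comm hσ_symm _ y z]

theorem mul_sdiff_inv_mul_subset [Group G] (K A B : Set G) :
    K * (B \ (K⁻¹ * A)) ⊆ (K * B) \ A := by
  rintro _ ⟨k, hk, b, ⟨hb, hbA⟩, rfl⟩
  refine ⟨Set.mul_mem_mul hk hb, fun hkb => hbA ?_⟩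
  exact ⟨k⁻¹, Set.inv_mem_inv.2 hk, k * b, hkb, inv_mul_cancel_left k b⟩

theorem IsMemorySetFor.transfer [Group G] [MulAction G X]
    (hσ_tri : ∀ x y z, σ x z ≤ σ x y + σ y z)
    (hτ_symm : ∀ x y, τ x y = τ y x) (hτ_tri : ∀ x y z, τ x z ≤ τ x y + τ y z)
    {K : Set G} (hK_one : 1 ∈ K) (hK_inv : K⁻¹ = K) {η δ' : ℝ} (hε : 0 ≤ ε) (hη : 0 ≤ η)
    (hδ : δ ≤ ε / 2) (hδ' : δ' ≤ η / 2)
    (hστ : ∀ x y, OrbitClose σ K η x y → τ x y ≤ ε / 2)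
    (hτσ : ∀ x y, OrbitClose τ K δ x y → σ x y ≤ δ')
    (hB : IsMemorySetFor σ (η / 2) δ' (K * A) B) :
    IsMemorySetFor τ ε δ A (K * B ∪ K ^ 4 * A) := by
  have subset_pow_mul : ∀ n, A ⊆ K ^ n * A := fun n =>
    Set.subset_mul_right _ (Set.one_mem_pow hK_one)
  have mul_pow_mul : ∀ n, K * (K ^ n * A) = K ^ (n + 1) * A := fun n => by
    rw [← mul_assoc, ← pow_succ']
  have sq_mul_subset : K ^ 2 * A ⊆ K * B ∪ K ^ 4 * A :=
    (Set.mul_subset_mul_right (Set.pow_subset_pow_right hK_one (by norm_num))).trans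
      Set.subset_union_right
  have mul_sdiff_subset : ∀ L C : Set G, K * (C \ (K * L)) ⊆ (K * C) \ L := fun L C => by
    simpa only [hK_inv] using mul_sdiff_inv_mul_subset K L C
  refine ⟨(subset_pow_mul 2).trans sq_mul_subset, fun x y hxy => ?_⟩
  have hxy_σ : ∀ C, K * C ⊆ K * B ∪ K ^ 4 * A → OrbitClose σ (C \ (K * A)) δ' x y :=
    fun C hC => .of_mul hτσ <| hxy.mono
      ((mul_sdiff_subset A C).trans (Set.sdiff_subset_sdiff_left hC)) le_rfl
  obtain ⟨z, hxz, hyz⟩ := hB.2 x y (hxy_σ B Set.subset_union_left)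
  have hxz_near : OrbitClose τ (K ^ 2 * A) (ε / 2) x z := by
    have on_thickening : OrbitClose σ (K * A) η x z := hxz.mono hB.1 (half_le_self hη)
    have hyz_off : OrbitClose σ ((K ^ 3 * A) \ (K * A)) (η / 2) y z :=
      hyz.mono (fun _ hg => hg.2) le_rfl
    have off_thickening : OrbitClose σ ((K ^ 3 * A) \ (K * A)) η x z :=
      ((hxy_σ _ ((mul_pow_mul 3).trans_subset Set.subset_union_right)).trans hσ_tri
        hyz_off).mono subset_rfl (by linarith)
    refine .of_mul hστ ((on_thickening.union off_thickening).mono ?_ le_rfl)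
    rw [mul_pow_mul, Set.union_sdiff_self]
    exact Set.subset_union_right
  have hyz_far : OrbitClose τ (K ^ 2 * A)ᶜ (ε / 2) y z := by
    refine .of_mul hστ (hyz.mono ?_ (half_le_self hη))
    rw [Set.compl_eq_univ_sdiff, pow_two, mul_assoc]
    exact (mul_sdiff_subset (K * A) Set.univ).trans fun _ hg => hg.2
  obtain ⟨hxz_B, hyz_A⟩ := OrbitClose.glue hτ_symm hτ_tri (by positivity) (subset_pow_mul 2)
    sq_mul_subset (hxy.mono subset_rfl hδ) hxz_near hyz_far
  exact ⟨z, add_halves ε ▸ hxz_B, add_halves ε ▸ hyz_A⟩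

theorem OrbitDominates.exists_isMemorySetFor_transfer [Group G] [MulAction G X]
    (hστ : OrbitDominates G σ τ) (hτσ : OrbitDominates G τ σ)
    (hσ_tri : ∀ x y z, σ x z ≤ σ x y + σ y z)
    (hτ_symm : ∀ x y, τ x y = τ y x) (hτ_tri : ∀ x y z, τ x z ≤ τ x y + τ y z) (hε : 0 < ε) :
    ∃ η > 0, ∀ δ' > 0, ∃ δ > 0, ∃ K : Finset G, 1 ∈ K ∧ ∀ A B : Set G,
      IsMemorySetFor σ η δ' ((K : Set G) * A) B →
        IsMemorySetFor τ ε δ A ((K : Set G) * B ∪ (K : Set G) ^ 4 * A) := by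
  classical
  obtain ⟨η, hη, S, hS⟩ := hστ (ε / 2) (half_pos hε)
  refine ⟨η / 2, half_pos hη, fun δ' hδ' => ?_⟩
  obtain ⟨δ, hδ, T, hT⟩ := hτσ (min δ' (η / 2)) (lt_min hδ' (half_pos hη))
  let K : Finset G := insert 1 (S ∪ T ∪ (S ∪ T)⁻¹)
  have hK_one : 1 ∈ K := Finset.mem_insert_self _ _
  have hK_inv : (K : Set G)⁻¹ = K := by
    simp only [K, Finset.coe_insert, Finset.coe_union, Finset.coe_inv, Set.inv_insert, inv_one,
      Set.union_inv, inv_inv, Set.union_comm]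
  have hSTK : S ∪ T ⊆ K := Finset.subset_union_left.trans (Finset.subset_insert _ _)
  have hSK : (S : Set G) ⊆ K := Finset.coe_subset.2 (Finset.subset_union_left.trans hSTK)
  have hTK : (T : Set G) ⊆ K := Finset.coe_subset.2 (Finset.subset_union_right.trans hSTK)
  refine ⟨min δ (ε / 2), lt_min hδ (half_pos hε), K, hK_one, fun A B hB => ?_⟩
  have hB_min : IsMemorySetFor σ (η / 2) (min δ' (η / 2)) ((K : Set G) * A) B :=
    ⟨hB.1, fun x y hxy => hB.2 x y (hxy.mono subset_rfl (min_le_left _ _))⟩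
  exact hB_min.transfer hσ_tri hτ_symm hτ_tri hK_one hK_inv hε.le hη.le (min_le_right _ _)
    (min_le_right _ _) (fun x y h => hS x y (h.mono hSK le_rfl))
    (fun x y h => hT x y (h.mono hTK (min_le_left _ _)))

end MemorySet

section TMPFor

variable {G X : Type*} {σ τ : X → X → ℝ}

/-- The topological Markov property with respect to an arbitrary function `σ` in place of the
metric. -/
def TMPFor (G : Type*) {X : Type*} [SMul G X] (σ : X → X → ℝ) : Prop :=
  ∀ ε > (0 : ℝ), ∃ δ > (0 : ℝ), ∀ A : Finset G, ∃ B : Finset G,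
    IsMemorySetFor σ ε δ (A : Set G) B

/-- The strong topological Markov property with respect to an arbitrary function `σ` in place of the
metric. -/
def StrongTMPFor (G : Type*) {X : Type*} [MulOneClass G] [SMul G X] (σ : X → X → ℝ) : Prop :=
  ∀ ε > (0 : ℝ), ∃ δ > (0 : ℝ), ∃ F : Finset G, (1 : G) ∈ F ∧
    ∀ A : Finset G, IsMemorySetFor σ ε δ (A : Set G) (F * A)

theorem TMPFor.of_orbitDominates [Group G] [MulAction G X] (h : TMPFor G σ)
    (hστ : OrbitDominates G σ τ) (hτσ : OrbitDominates G τ σ)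
    (hσ_tri : ∀ x y z, σ x z ≤ σ x y + σ y z)
    (hτ_symm : ∀ x y, τ x y = τ y x) (hτ_tri : ∀ x y z, τ x z ≤ τ x y + τ y z) :
    TMPFor G τ := by
  classical
  intro ε hε
  obtain ⟨η, hη, transfer⟩ :=
    hστ.exists_isMemorySetFor_transfer hτσ hσ_tri hτ_symm hτ_tri hε
  obtain ⟨δ', hδ', hmem⟩ := h η hη
  obtain ⟨δ, hδ, K, -, hK⟩ := transfer δ' hδ'
  refine ⟨δ, hδ, fun A => ?_⟩
  obtain ⟨B, hB⟩ := hmem (K * A)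
  refine ⟨K * B ∪ K ^ 4 * A, ?_⟩
  push_cast at hB ⊢
  exact hK A B hB

theorem StrongTMPFor.of_orbitDominates [Group G] [MulAction G X] (h : StrongTMPFor G σ)
    (hστ : OrbitDominates G σ τ) (hτσ : OrbitDominates G τ σ)
    (hσ_tri : ∀ x y z, σ x z ≤ σ x y + σ y z)
    (hτ_symm : ∀ x y, τ x y = τ y x) (hτ_tri : ∀ x y z, τ x z ≤ τ x y + τ y z) :
    StrongTMPFor G τ := by
  classical
  intro ε hε
  obtain ⟨η, hη, transfer⟩ :=
    hστ.exists_isMemorySetFor_transfer hτσ hσ_tri hτ_symm hτ_tri hε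
  obtain ⟨δ', hδ', F, -, hmem⟩ := h η hη
  obtain ⟨δ, hδ, K, hK_one, hK⟩ := transfer δ' hδ'
  refine ⟨δ, hδ, K * F * K ∪ K ^ 4,
    Finset.mem_union_right _ (Finset.one_mem_pow hK_one), fun A => ?_⟩
  have hB := hmem (K * A)
  push_cast at hB ⊢
  simpa only [Set.union_mul, mul_assoc] using hK A _ hB

theorem tmp_iff_tmpFor_dist [SMul G X] [PseudoMetricSpace X] [CompactSpace X] :
    TMP G X ↔ TMPFor G (dist : X → X → ℝ) :=
  forall₂_congr fun _ hε => exists_congr fun _ => and_congr_right fun hδ =>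
    forall_congr' fun _ => exists_congr fun _ =>
      (isMemorySetFor_iff_supOf continuous_dist hε.le hδ.le).symm

theorem strongTMP_iff_strongTMPFor_dist [Group G] [DecidableEq G] [MulAction G X]
    [PseudoMetricSpace X] [CompactSpace X] :
    StrongTMP G X ↔ StrongTMPFor G (dist : X → X → ℝ) :=
  forall₂_congr fun _ hε => exists_congr fun _ => and_congr_right fun hδ =>
    exists_congr fun F => and_congr_right fun _ => forall_congr' fun A => by
      rw [isMemorySetFor_iff_supOf continuous_dist hε.le hδ.le, ← Finset.coe_mul]
      rfl

section Continuous

variable [TopologicalSpace X] [CompactSpace X]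

theorem tmpFor_iff_supOf [SMul G X] (hσ : Continuous fun p : X × X => σ p.1 p.2)
    (hσ_symm : ∀ x y, σ x y = σ y x) :
    TMPFor G σ ↔ ∀ ε > (0 : ℝ), ∃ δ > (0 : ℝ), ∀ A : Finset G, ∃ B : Finset G,
      (A : Set G) ⊆ (B : Set G) ∧
      ∀ x y : X, supOf σ ((B : Set G) \ (A : Set G)) x y ≤ δ →
        ∃ z : X, supOf σ (B : Set G) z x ≤ ε ∧ supOf σ (Set.univ \ (A : Set G)) z y ≤ ε :=
  forall₂_congr fun _ hε => exists_congr fun _ => and_congr_right fun hδ =>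
    forall_congr' fun _ => exists_congr fun _ =>
      isMemorySetFor_iff_supOf_comm hσ hσ_symm hε.le hδ.le

theorem strongTMPFor_iff_supOf [Group G] [DecidableEq G] [MulAction G X]
    (hσ : Continuous fun p : X × X => σ p.1 p.2) (hσ_symm : ∀ x y, σ x y = σ y x) :
    StrongTMPFor G σ ↔ ∀ ε > (0 : ℝ), ∃ δ > (0 : ℝ), ∃ F : Finset G, (1 : G) ∈ F ∧
      ∀ A : Finset G, ∀ x y : X,
        supOf σ (((F * A : Finset G) : Set G) \ (A : Set G)) x y ≤ δ →
        ∃ z : X, supOf σ ((F * A : Finset G) : Set G) z x ≤ ε ∧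
          supOf σ (Set.univ \ (A : Set G)) z y ≤ ε :=
  forall₂_congr fun _ hε => exists_congr fun _ => and_congr_right fun hδ =>
    exists_congr fun F => and_congr_right fun hF => forall_congr' fun A => by
      rw [isMemorySetFor_iff_supOf_comm hσ hσ_symm hε.le hδ.le, ← Finset.coe_mul]
      exact and_iff_right (Finset.coe_subset.2 (Finset.subset_mul_right A hF))

end Continuous

end TMPFor

theorem stmt4_general (G X : Type*) [Group G] [DecidableEq G]
    [MetricSpace X] [CompactSpace X] [MulAction G X]
    (hcont : ∀ g : G, Continuous fun x : X => g • x)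
    (ρ : X → X → ℝ)
    (hρ_self : ∀ x : X, ρ x x = 0)
    (hρ_symm : ∀ x y : X, ρ x y = ρ y x)
    (hρ_tri : ∀ x y z : X, ρ x z ≤ ρ x y + ρ y z)
    (hρ_cont : Continuous fun p : X × X => ρ p.1 p.2)
    (hρ_gen : ∀ x y : X, x ≠ y → ∃ s : G, 0 < ρ (s • x) (s • y)) :
    (TMP G X ↔
      ∀ ε > (0 : ℝ), ∃ δ > (0 : ℝ), ∀ A : Finset G, ∃ B : Finset G,
        (A : Set G) ⊆ (B : Set G) ∧
        ∀ x y : X, supOf ρ ((B : Set G) \ (A : Set G)) x y ≤ δ →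
          ∃ z : X, supOf ρ (B : Set G) z x ≤ ε ∧
            supOf ρ (Set.univ \ (A : Set G)) z y ≤ ε) ∧
    (StrongTMP G X ↔
      ∀ ε > (0 : ℝ), ∃ δ > (0 : ℝ), ∃ F : Finset G, (1 : G) ∈ F ∧
        ∀ A : Finset G, ∀ x y : X,
          supOf ρ (((F * A : Finset G) : Set G) \ (A : Set G)) x y ≤ δ →
          ∃ z : X, supOf ρ ((F * A : Finset G) : Set G) z x ≤ ε ∧
            supOf ρ (Set.univ \ (A : Set G)) z y ≤ ε) := by
  have : ContinuousConstSMul G X := ⟨hcont⟩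
  have dist_dominates : OrbitDominates G dist ρ :=
    orbitDominates_of_continuous continuous_dist hρ_cont fun x y hxy => by
      have hne : x ≠ y := by
        rintro rfl
        exact hxy.ne' (hρ_self x)
      exact ⟨1, by simpa only [one_smul] using dist_pos.2 hne⟩
  have dominates_dist : OrbitDominates G ρ dist :=
    orbitDominates_of_continuous hρ_cont continuous_dist fun x y hxy =>
      hρ_gen x y (dist_pos.1 hxy)
  rw [tmp_iff_tmpFor_dist, strongTMP_iff_strongTMPFor_dist, ← tmpFor_iff_supOf hρ_cont hρ_symm,
    ← strongTMPFor_iff_supOf hρ_cont hρ_symm]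
  exact ⟨
    ⟨fun h => h.of_orbitDominates dist_dominates dominates_dist dist_triangle hρ_symm hρ_tri,
      fun h => h.of_orbitDominates dominates_dist dist_dominates hρ_tri dist_comm dist_triangle⟩,
    ⟨fun h => h.of_orbitDominates dist_dominates dominates_dist dist_triangle hρ_symm hρ_tri,
      fun h => h.of_orbitDominates dominates_dist dist_dominates hρ_tri dist_comm dist_triangle⟩⟩

/-- Let `ρ` be a dynamically generating continuous pseudometric on `X` for an
action `G ↷ X`.  Then (1) the action has the TMP iff for every `ε > 0` there is `δ > 0` such
that for every finite `A ⊆ G` there is a finite `B ⊇ A` so that for all `x,y` with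
`ρ_{B∖A}(x,y) ≤ δ` there is `z` with `ρ_B(z,x) ≤ ε` and `ρ_{G∖A}(z,y) ≤ ε`; and (2) the action
has the strong TMP iff for every `ε > 0` there are `δ > 0` and a finite `F ∋ 1` such that for
every finite `A ⊆ G` and all `x,y` with `ρ_{FA∖A}(x,y) ≤ δ` there is `z` with
`ρ_{FA}(z,x) ≤ ε` and `ρ_{G∖A}(z,y) ≤ ε`. -/
theorem stmt4 (G X : Type*) [Group G] [Countable G] [Infinite G] [DecidableEq G]
    [MetricSpace X] [CompactSpace X] [MulAction G X]
    (hcont : ∀ g : G, Continuous fun x : X => g • x)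
    (ρ : X → X → ℝ)
    (hρ_self : ∀ x : X, ρ x x = 0)
    (hρ_symm : ∀ x y : X, ρ x y = ρ y x)
    (hρ_tri : ∀ x y z : X, ρ x z ≤ ρ x y + ρ y z)
    (hρ_cont : Continuous fun p : X × X => ρ p.1 p.2)
    (hρ_gen : ∀ x y : X, x ≠ y → ∃ s : G, 0 < ρ (s • x) (s • y)) :
    (TMP G X ↔
      ∀ ε > (0 : ℝ), ∃ δ > (0 : ℝ), ∀ A : Finset G, ∃ B : Finset G,
        (A : Set G) ⊆ (B : Set G) ∧
        ∀ x y : X, supOf ρ ((B : Set G) \ (A : Set G)) x y ≤ δ →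
          ∃ z : X, supOf ρ (B : Set G) z x ≤ ε ∧
            supOf ρ (Set.univ \ (A : Set G)) z y ≤ ε) ∧
    (StrongTMP G X ↔
      ∀ ε > (0 : ℝ), ∃ δ > (0 : ℝ), ∃ F : Finset G, (1 : G) ∈ F ∧
        ∀ A : Finset G, ∀ x y : X,
          supOf ρ (((F * A : Finset G) : Set G) \ (A : Set G)) x y ≤ δ →
          ∃ z : X, supOf ρ ((F * A : Finset G) : Set G) z x ≤ ε ∧
            supOf ρ (Set.univ \ (A : Set G)) z y ≤ ε) :=
  stmt4_general G X hcont ρ hρ_self hρ_symm hρ_tri hρ_cont hρ_gen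
end

section
/- Let Λ be a nonempty finite set and X ⊆ Λ^G a G-subshift with the left shift action. Then: (1) G ↷ X has the TMP if and only if for every finite A ⊆ G there is a finite B ⊆ G containing A such that for any x,y ∈ X with x = y on B∖A, the configuration z ∈ Λ^G defined by z = x on A and z = y on G∖A lies in X; (2) G ↷ X has the strong TMP if and only if there is a finite F ⊆ G containing the identity such that for every finite A ⊆ G and any x,y ∈ X with x = y on AF∖A, the configuration z ∈ Λ^G defined by z = x on A and z = y on G∖A lies in X. -/
open Pointwise

/-- The left shift action of `G` on configurations `G → Λ`, `(g • x) h = x (g⁻¹ h)`. -/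
instance shiftAction (G Λ : Type*) [Group G] : MulAction G (G → Λ) where
  smul g x := fun h => x (g⁻¹ * h)
  one_smul x := by
    funext h; show x (1⁻¹ * h) = x h; simp
  mul_smul g₁ g₂ x := by
    funext h; show x ((g₁ * g₂)⁻¹ * h) = x (g₂⁻¹ * (g₁⁻¹ * h)); simp [mul_inv_rev, mul_assoc]

/-!
Shifts act by `(g • x) h = x (g⁻¹ h)`, and the uniformity of `Λ ^ G` is generated by agreement on
finite windows. So if `W` is a window, `d_K(x, y)` being small and `x = y` on `K⁻¹ W` are
interchangeable conditions, and the two kinds of memory sets can be converted into each other at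
the cost of an inversion and a dilation by `W`:

* a memory set `B` for `W A⁻¹` yields the gluing set `B⁻¹ W` for `A`, because the point `z` it
  provides is forced to be the configuration glued from `x` and `y`;
* a gluing set `D` for `A⁻¹` yields the memory set `D⁻¹ ∪ (W ∪ W⁻¹) A` for `A`, because the glued
  configuration is close to `x` on `B` and to `y` off `A`.

If `B = F (W A⁻¹)`, respectively `D = A⁻¹ F`, these sets are `A (W⁻¹ F⁻¹ W)` and
`(F⁻¹ ∪ W ∪ W⁻¹) A`, which is the strong version.
-/

open Filter Set
open scoped Uniformity

section FiniteWindows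

variable {ι Λ : Type*}

theorem hasBasis_uniformity_pi_bot :
    (@uniformity _ (@Pi.uniformSpace ι (fun _ => Λ) fun _ => ⊥)).HasBasis
      (fun s : Set ι => s.Finite) fun s => {p | EqOn p.1 p.2 s} := by
  let : UniformSpace Λ := ⊥
  have h_uniformity : 𝓤 (ι → Λ) = ⨅ i, 𝓟 {p | p.1 i = p.2 i} := by
    simp only [Pi.uniformity, bot_uniformity, comap_principal]
    rfl
  have h_inter (s : Set ι) :
      {p : (ι → Λ) × (ι → Λ) | EqOn p.1 p.2 s} = ⋂ i ∈ s, {p | p.1 i = p.2 i} := by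
    ext p
    simp [EqOn]
  simpa only [h_uniformity, h_inter] using hasBasis_iInf_principal_finite _

variable [PseudoMetricSpace (ι → Λ)]

theorem exists_finset_forall_eqOn_imp_dist_le
    (h : PseudoMetricSpace.toUniformSpace = @Pi.uniformSpace ι (fun _ => Λ) fun _ => ⊥)
    (i : ι) {ε : ℝ} (hε : 0 < ε) :
    ∃ W : Finset ι, i ∈ W ∧ ∀ x y : ι → Λ, EqOn x y W → dist x y ≤ ε := by
  classical
  have h_basis := h ▸ hasBasis_uniformity_pi_bot (ι := ι) (Λ := Λ)
  obtain ⟨s, hs, hsε⟩ := (h_basis.le_basis_iff Metric.uniformity_basis_dist_le).1 le_rfl ε hε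
  refine ⟨insert i hs.toFinset, Finset.mem_insert_self _ _, fun x y hxy => ?_⟩
  have h_sub : s ⊆ (insert i hs.toFinset : Finset ι) := by simp
  exact hsε (a := (x, y)) (hxy.mono h_sub)

theorem exists_pos_forall_dist_le_imp_eqOn
    (h : PseudoMetricSpace.toUniformSpace = @Pi.uniformSpace ι (fun _ => Λ) fun _ => ⊥)
    (W : Finset ι) :
    ∃ δ > (0 : ℝ), ∀ x y : ι → Λ, dist x y ≤ δ → EqOn x y W := by
  have h_basis := h ▸ hasBasis_uniformity_pi_bot (ι := ι) (Λ := Λ)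
  obtain ⟨δ, hδ, hδW⟩ :=
    (Metric.uniformity_basis_dist_le.le_basis_iff h_basis).1 le_rfl W W.finite_toSet
  exact ⟨δ, hδ, fun x y hxy => hδW (a := (x, y)) hxy⟩

end FiniteWindows

section SupDist

variable {G α : Type*} [SMul G α] [PseudoMetricSpace α] {K : Set G} {x y : α} {c : ℝ}

theorem supD_le (hc : 0 ≤ c) (h : ∀ g ∈ K, dist (g • x) (g • y) ≤ c) : supD K x y ≤ c :=
  Real.iSup_le (fun g => h g g.2) hc

theorem dist_smul_le_supD [BoundedSpace α] {g : G} (hg : g ∈ K) :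
    dist (g • x) (g • y) ≤ supD K x y := by
  obtain ⟨C, hC⟩ := Metric.boundedSpace_iff.1 ‹BoundedSpace α›
  have h_bdd : BddAbove (range fun g : K => dist ((g : G) • x) ((g : G) • y)) :=
    ⟨C, forall_mem_range.2 fun _ => hC _ _⟩
  exact le_ciSup h_bdd ⟨g, hg⟩

end SupDist

section Shift

variable {G Λ : Type*} [Group G] {K W : Set G} {x y : G → Λ}

theorem forall_eqOn_smul_iff : (∀ g ∈ K, EqOn (g • x) (g • y) W) ↔ EqOn x y (K⁻¹ * W) := by
  constructor
  · rintro h _ ⟨g, hg, w, hw, rfl⟩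
    have hgw : x (g⁻¹⁻¹ * w) = y (g⁻¹⁻¹ * w) := h g⁻¹ hg hw
    rwa [inv_inv] at hgw
  · exact fun h g hg w hw => h (mul_mem_mul (inv_mem_inv.2 hg) hw)

variable [PseudoMetricSpace (G → Λ)]

theorem supD_le_of_eqOn {ε : ℝ} (hW : ∀ x y : G → Λ, EqOn x y W → dist x y ≤ ε)
    (hxy : EqOn x y (K⁻¹ * W)) : supD K x y ≤ ε := by
  have hε : 0 ≤ ε := dist_self x ▸ hW x x (eqOn_refl x W)
  exact supD_le hε fun g hg => hW _ _ (forall_eqOn_smul_iff.2 hxy g hg)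

theorem eqOn_of_supD_le [BoundedSpace (G → Λ)] {δ : ℝ}
    (hW : ∀ x y : G → Λ, dist x y ≤ δ → EqOn x y W) (hxy : supD K x y ≤ δ) :
    EqOn x y (K⁻¹ * W) :=
  forall_eqOn_smul_iff.1 fun _ hg => hW _ _ ((dist_smul_le_supD hg).trans hxy)

end Shift

/-- The gluing condition of an `(ε, δ)`-memory set `B` for `A`, relative to a set `X` of points of
an ambient metric space carrying the action. Unlike in `IsMemorySet`, the containment `A ⊆ B` is
not part of the definition. -/
def IsMemorySetIn {G α : Type*} [SMul G α] [PseudoMetricSpace α] (X : Set α) (ε δ : ℝ)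
    (A B : Finset G) : Prop :=
  ∀ x ∈ X, ∀ y ∈ X, supD ((B : Set G) \ (A : Set G)) x y ≤ δ →
    ∃ z ∈ X, supD (B : Set G) x z ≤ ε ∧ supD (univ \ (A : Set G)) y z ≤ ε

/-- The combinatorial counterpart of a memory set: configurations of `X` that agree on `B \ A` can
be glued along `A` within `X`. The containment `A ⊆ B` is not part of the definition. -/
def IsGluingSet {ι Λ : Type*} [DecidableEq ι] (X : Set (ι → Λ)) (A B : Finset ι) : Prop :=
  ∀ x ∈ X, ∀ y ∈ X, EqOn x y ((B : Set ι) \ (A : Set ι)) → A.piecewise x y ∈ X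

section Conversion

variable {G Λ : Type*} [Group G] [DecidableEq G] {A B D W : Finset G} {x y : G → Λ}

theorem eqOn_sdiff_inv_mul_of_eqOn_inv_mul_sdiff
    (h : EqOn x y (((B⁻¹ * W : Finset G) : Set G) \ (A : Set G))) :
    EqOn x y (((B : Set G) \ ((W * A⁻¹ : Finset G) : Set G))⁻¹ * (W : Set G)) := by
  rintro _ ⟨g, ⟨hgB, hgA⟩, w, hw, rfl⟩
  refine h ⟨Finset.mul_mem_mul (Finset.mem_inv'.2 hgB) hw, fun hA => hgA ?_⟩
  have hg : w * (g * w)⁻¹ = g⁻¹ := by group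
  exact Finset.mem_coe.2 (hg ▸ Finset.mul_mem_mul hw (Finset.inv_mem_inv hA))

theorem eqOn_piecewise_inv_left (hW : 1 ∈ W) (hWA : W⁻¹ * A ⊆ B)
    (hxy : EqOn x y (((B : Set G) \ (A : Set G))⁻¹ * (W : Set G))) :
    EqOn x (A⁻¹.piecewise x y) ((B : Set G)⁻¹ * (W : Set G)) := by
  rintro _ ⟨b, hb, w, hw, rfl⟩
  dsimp only
  by_cases hg : b * w ∈ A⁻¹
  · rw [Finset.piecewise_eq_of_mem _ _ _ hg]
  rw [Finset.piecewise_eq_of_notMem _ _ _ hg]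
  by_cases hbA : b⁻¹ ∈ A
  · have hgB : (b * w)⁻¹ ∈ B := by
      rw [mul_inv_rev]
      exact hWA (Finset.mul_mem_mul (Finset.inv_mem_inv hw) hbA)
    simpa using hxy (mul_mem_mul (s := ((B : Set G) \ A)⁻¹) ⟨hgB, by simpa using hg⟩ hW)
  · exact hxy (mul_mem_mul ⟨hb, hbA⟩ hw)

theorem eqOn_piecewise_inv_right (hWA : W * A ⊆ B)
    (hxy : EqOn x y (((B : Set G) \ (A : Set G))⁻¹ * (W : Set G))) :
    EqOn y (A⁻¹.piecewise x y) ((univ \ (A : Set G))⁻¹ * (W : Set G)) := by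
  rintro _ ⟨a, ⟨-, ha⟩, w, hw, rfl⟩
  dsimp only
  by_cases hg : a * w ∈ A⁻¹
  · rw [Finset.piecewise_eq_of_mem _ _ _ hg]
    have haB : a⁻¹ ∈ B := by
      have h_mem : w * (a * w)⁻¹ ∈ W * A := Finset.mul_mem_mul hw (Finset.mem_inv'.1 hg)
      exact hWA (by simpa using h_mem)
    exact (hxy (mul_mem_mul ⟨haB, ha⟩ hw)).symm
  · rw [Finset.piecewise_eq_of_notMem _ _ _ hg]

variable [PseudoMetricSpace (G → Λ)] [BoundedSpace (G → Λ)] {X : Set (G → Λ)} {ε δ : ℝ}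

theorem IsMemorySetIn.isGluingSet (hW : 1 ∈ W)
    (hε : ∀ x y : G → Λ, dist x y ≤ ε → EqOn x y (1 : Finset G))
    (hδ : ∀ x y : G → Λ, EqOn x y W → dist x y ≤ δ)
    (hAB : W * A⁻¹ ⊆ B) (h : IsMemorySetIn X ε δ (W * A⁻¹) B) :
    IsGluingSet X A (B⁻¹ * W) := by
  intro x hx y hy hxy
  obtain ⟨z, hz, hxz, hyz⟩ :=
    h x hx y hy (supD_le_of_eqOn hδ (eqOn_sdiff_inv_mul_of_eqOn_inv_mul_sdiff hxy))
  have hxz' : EqOn x z (B : Set G)⁻¹ := by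
    simpa only [Finset.coe_one, mul_one] using eqOn_of_supD_le hε hxz
  have hyz' : EqOn y z (univ \ ((W * A⁻¹ : Finset G) : Set G))⁻¹ := by
    simpa only [Finset.coe_one, mul_one] using eqOn_of_supD_le hε hyz
  suffices A.piecewise x y = z from this ▸ hz
  funext g
  by_cases hgB : g⁻¹ ∈ B
  · rw [← hxz' hgB]
    by_cases hgA : g ∈ A
    · exact Finset.piecewise_eq_of_mem _ _ _ hgA
    · rw [Finset.piecewise_eq_of_notMem _ _ _ hgA]
      have hgBW : g ∈ B⁻¹ * W := by
        simpa using Finset.mul_mem_mul (Finset.mem_inv'.2 hgB) hW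
      exact (hxy ⟨hgBW, hgA⟩).symm
  · have hgA : g ∉ A := fun hgA =>
      hgB (hAB (by simpa using Finset.mul_mem_mul hW (Finset.inv_mem_inv hgA)))
    rw [Finset.piecewise_eq_of_notMem _ _ _ hgA]
    exact hyz' ⟨mem_univ _, fun h => hgB (hAB h)⟩

theorem IsGluingSet.isMemorySetIn (hW : 1 ∈ W)
    (hε : ∀ x y : G → Λ, EqOn x y W → dist x y ≤ ε)
    (hδ : ∀ x y : G → Λ, dist x y ≤ δ → EqOn x y W)
    (h : IsGluingSet X A⁻¹ D) :
    IsMemorySetIn X ε δ A (D⁻¹ ∪ (W ∪ W⁻¹) * A) := by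
  intro x hx y hy hxy
  have hxyW := eqOn_of_supD_le hδ hxy
  have hD : EqOn x y ((D : Set G) \ (A⁻¹ : Finset G)) := fun g hg => by
    have hgB : g⁻¹ ∈ D⁻¹ ∪ (W ∪ W⁻¹) * A :=
      Finset.mem_union_left _ (Finset.inv_mem_inv hg.1)
    have hgA : g⁻¹ ∉ A := fun hA => hg.2 (Finset.mem_inv'.2 hA)
    simpa using hxyW (mul_mem_mul (inv_mem_inv.2 (mem_sdiff_of_mem hgB hgA)) hW)
  have hWA : W * A ⊆ D⁻¹ ∪ (W ∪ W⁻¹) * A :=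
    (Finset.mul_subset_mul_right Finset.subset_union_left).trans Finset.subset_union_right
  have hWA' : W⁻¹ * A ⊆ D⁻¹ ∪ (W ∪ W⁻¹) * A :=
    (Finset.mul_subset_mul_right Finset.subset_union_right).trans Finset.subset_union_right
  exact ⟨A⁻¹.piecewise x y, h x hx y hy hD,
    supD_le_of_eqOn hε (eqOn_piecewise_inv_left hW hWA' hxyW),
    supD_le_of_eqOn hε (eqOn_piecewise_inv_right hWA hxyW)⟩

end Conversion

section Characterization

variable {G Λ : Type*} [Group G] [DecidableEq G] [PseudoMetricSpace (G → Λ)]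
  [BoundedSpace (G → Λ)]

theorem forall_exists_isMemorySetIn_iff
    (h : PseudoMetricSpace.toUniformSpace = @Pi.uniformSpace G (fun _ => Λ) fun _ => ⊥)
    (X : Set (G → Λ)) :
    (∀ ε > (0 : ℝ), ∃ δ > (0 : ℝ), ∀ A : Finset G, ∃ B : Finset G,
        (A : Set G) ⊆ (B : Set G) ∧ IsMemorySetIn X ε δ A B) ↔
      ∀ A : Finset G, ∃ B : Finset G, (A : Set G) ⊆ (B : Set G) ∧ IsGluingSet X A B := by
  constructor
  · intro hX A
    obtain ⟨ε, hε, hε₁⟩ := exists_pos_forall_dist_le_imp_eqOn h 1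
    obtain ⟨δ, hδ, hX⟩ := hX ε hε
    obtain ⟨W, hW, hWδ⟩ := exists_finset_forall_eqOn_imp_dist_le h 1 hδ
    obtain ⟨B, hAB, hB⟩ := hX (W * A⁻¹)
    rw [Finset.coe_subset] at hAB
    have hA_inv : A⁻¹ ⊆ B := (Finset.subset_mul_right _ hW).trans hAB
    have hAB_inv : A ⊆ B⁻¹ := by simpa only [inv_inv] using Finset.inv_subset_inv hA_inv
    exact ⟨B⁻¹ * W, Finset.coe_subset.2 (hAB_inv.trans (Finset.subset_mul_left _ hW)),
      hB.isGluingSet hW hε₁ hWδ hAB⟩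
  · intro hX ε hε
    obtain ⟨W, hW, hWε⟩ := exists_finset_forall_eqOn_imp_dist_le h 1 hε
    obtain ⟨δ, hδ, hδW⟩ := exists_pos_forall_dist_le_imp_eqOn h W
    refine ⟨δ, hδ, fun A => ?_⟩
    obtain ⟨D, -, hD⟩ := hX A⁻¹
    have hAB : A ⊆ D⁻¹ ∪ (W ∪ W⁻¹) * A :=
      (Finset.subset_mul_right _ (Finset.mem_union_left _ hW)).trans Finset.subset_union_right
    exact ⟨_, Finset.coe_subset.2 hAB, hD.isMemorySetIn hW hWε hδW⟩

theorem forall_exists_isMemorySetIn_mul_iff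
    (h : PseudoMetricSpace.toUniformSpace = @Pi.uniformSpace G (fun _ => Λ) fun _ => ⊥)
    (X : Set (G → Λ)) :
    (∀ ε > (0 : ℝ), ∃ δ > (0 : ℝ), ∃ F : Finset G, (1 : G) ∈ F ∧
        ∀ A : Finset G, IsMemorySetIn X ε δ A (F * A)) ↔
      ∃ F : Finset G, (1 : G) ∈ F ∧ ∀ A : Finset G, IsGluingSet X A (A * F) := by
  constructor
  · intro hX
    obtain ⟨ε, hε, hε₁⟩ := exists_pos_forall_dist_le_imp_eqOn h 1
    obtain ⟨δ, hδ, F, hF, hX⟩ := hX ε hε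
    obtain ⟨W, hW, hWδ⟩ := exists_finset_forall_eqOn_imp_dist_le h 1 hδ
    refine ⟨W⁻¹ * F⁻¹ * W, ?_, fun A => ?_⟩
    · simpa using Finset.mul_mem_mul
        (Finset.mul_mem_mul (Finset.inv_mem_inv hW) (Finset.inv_mem_inv hF)) hW
    · have hB : A * (W⁻¹ * F⁻¹ * W) = (F * (W * A⁻¹))⁻¹ * W := by
        simp only [mul_inv_rev, inv_inv, mul_assoc]
      rw [hB]
      exact (hX (W * A⁻¹)).isGluingSet hW hε₁ hWδ
        (Finset.subset_mul_right _ hF)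
  · rintro ⟨F, hF, hX⟩ ε hε
    obtain ⟨W, hW, hWε⟩ := exists_finset_forall_eqOn_imp_dist_le h 1 hε
    obtain ⟨δ, hδ, hδW⟩ := exists_pos_forall_dist_le_imp_eqOn h W
    refine ⟨δ, hδ, F⁻¹ ∪ (W ∪ W⁻¹), ?_, fun A => ?_⟩
    · exact Finset.mem_union_left _ (by simpa using hF)
    · have hB : (F⁻¹ ∪ (W ∪ W⁻¹)) * A = (A⁻¹ * F)⁻¹ ∪ (W ∪ W⁻¹) * A := by
        rw [Finset.union_mul, mul_inv_rev, inv_inv]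
      rw [hB]
      exact (hX A⁻¹).isMemorySetIn hW hWε hδW

theorem stmt5_general
    (h : PseudoMetricSpace.toUniformSpace = @Pi.uniformSpace G (fun _ => Λ) fun _ => ⊥)
    (X : Set (G → Λ)) :
    ((∀ ε > (0 : ℝ), ∃ δ > (0 : ℝ), ∀ A : Finset G, ∃ B : Finset G,
        (A : Set G) ⊆ (B : Set G) ∧ IsMemorySetIn X ε δ A B) ↔
      ∀ A : Finset G, ∃ B : Finset G, (A : Set G) ⊆ (B : Set G) ∧ IsGluingSet X A B) ∧
    ((∀ ε > (0 : ℝ), ∃ δ > (0 : ℝ), ∃ F : Finset G, (1 : G) ∈ F ∧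
        ∀ A : Finset G, IsMemorySetIn X ε δ A (F * A)) ↔
      ∃ F : Finset G, (1 : G) ∈ F ∧ ∀ A : Finset G, IsGluingSet X A (A * F)) :=
  ⟨forall_exists_isMemorySetIn_iff h X, forall_exists_isMemorySetIn_mul_iff h X⟩

end Characterization

/-- Combinatorial characterization of the (strong) TMP for `G`-subshifts:
`G ↷ X` has the TMP iff for every finite `A` there is a finite `B ⊇ A` such that whenever two
points of `X` agree on `B∖A`, the configuration equal to the first on `A` and to the second
elsewhere belongs to `X`; and `G ↷ X` has the strong TMP iff there is a finite `F ∋ 1` such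
that for every finite `A`, whenever two points of `X` agree on `AF∖A`, the glued
configuration belongs to `X`. -/
theorem stmt5 (G Λ : Type*) [Group G] [Countable G] [Infinite G] [DecidableEq G]
    [Fintype Λ] [Nonempty Λ]
    [MetricSpace (G → Λ)] [CompactSpace (G → Λ)]
    (hcompat : (inferInstance : TopologicalSpace (G → Λ)) =
      @Pi.topologicalSpace G (fun _ => Λ) (fun _ => ⊥))
    (X : Set (G → Λ)) (hXclosed : IsClosed X)
    (hXinv : ∀ g : G, ∀ x ∈ X, g • x ∈ X) :
    ((∀ ε > (0 : ℝ), ∃ δ > (0 : ℝ), ∀ A : Finset G, ∃ B : Finset G,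
        (A : Set G) ⊆ (B : Set G) ∧
        ∀ x ∈ X, ∀ y ∈ X, supD ((B : Set G) \ (A : Set G)) x y ≤ δ →
          ∃ z ∈ X, supD (B : Set G) x z ≤ ε ∧ supD (Set.univ \ (A : Set G)) y z ≤ ε) ↔
      (∀ A : Finset G, ∃ B : Finset G, (A : Set G) ⊆ (B : Set G) ∧
        ∀ x ∈ X, ∀ y ∈ X, (∀ g ∈ (B : Set G) \ (A : Set G), x g = y g) →
          (fun g => if g ∈ A then x g else y g) ∈ X)) ∧
    ((∀ ε > (0 : ℝ), ∃ δ > (0 : ℝ), ∃ F : Finset G, (1 : G) ∈ F ∧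
        ∀ A : Finset G,
        ∀ x ∈ X, ∀ y ∈ X,
          supD (((F * A : Finset G) : Set G) \ (A : Set G)) x y ≤ δ →
          ∃ z ∈ X, supD ((F * A : Finset G) : Set G) x z ≤ ε ∧
            supD (Set.univ \ (A : Set G)) y z ≤ ε) ↔
      (∃ F : Finset G, (1 : G) ∈ F ∧
        ∀ A : Finset G, ∀ x ∈ X, ∀ y ∈ X,
          (∀ g ∈ ((A * F : Finset G) : Set G) \ (A : Set G), x g = y g) →
          (fun g => if g ∈ A then x g else y g) ∈ X)) :=
  stmt5_general (unique_uniformity_of_compact rfl hcompat.symm) X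
end

section
/- Let G ↷ X be an action, F a finite subset of G with e_G ∈ F = F⁻¹, and δ > 0. Then there exists η > 0 such that for any finite A ⊆ G, any FA-separated V ⊆ G, any family (x_v)_{v∈V} in X, and any y ∈ X satisfying d_{(FA∖A)v}(x_v,y) ≤ η for all v ∈ V, the family (w_γ)_{γ∈G} defined by w_γ = γ x_v if γ ∈ Av for some v ∈ V and w_γ = γ y if γ ∈ G∖AV, is an (F,δ) pseudo-orbit. -/
open Pointwise

/-!
At a pair `g`, `s * g` which lies entirely inside or entirely outside `A * V`, both values of `w`
come from the same point (inside, because `V` is separated), so `s • w g = w (s * g)`. If `g` is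
inside and `s * g` is outside, then `s * g` lies in `((F * A) \ A) * {v}` for some `v ∈ V`, where
the orbits of `x v` and `y` are assumed to be `η`-close. If `g` is outside and `s * g` is inside,
then the step back by `s⁻¹ ∈ F` is of the previous kind, and the uniform continuity of `s` carries
the estimate between `s⁻¹ • w (s * g)` and `w g` over to `w (s * g)` and `s • w g`.
-/

theorem le_supOf_of_finite {G X : Type*} [SMul G X] (ρ : X → X → ℝ) {K : Set G} (hK : K.Finite)
    {g : G} (hg : g ∈ K) (x y : X) : ρ (g • x) (g • y) ≤ supOf ρ K x y :=
  haveI := hK.to_subtype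
  le_ciSup (f := fun k : K => ρ ((k : G) • x) ((k : G) • y)) (Set.finite_range _).bddAbove ⟨g, hg⟩

theorem Separated.eq_of_mul_eq_mul {G : Type*} [Mul G] {B V : Set G} (hV : Separated B V)
    {b c u v : G} (hb : b ∈ B) (hc : c ∈ B) (hu : u ∈ V) (hv : v ∈ V) (h : b * u = c * v) :
    u = v := by
  by_contra huv
  exact Set.disjoint_left.1 (hV u hu v hv huv) (Set.mul_mem_mul hb rfl)
    (h ▸ Set.mul_mem_mul hc rfl)

/-- The family `w` glued from the orbits of the points `x v` and of `y`: it follows the orbit of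
`x v` on the translate `A * {v}` for each `v ∈ V`, and the orbit of `y` off `A * V`. This is a
predicate rather than a construction, since the translates may overlap; only the values of `x` on
`V` matter. -/
structure IsOrbitGluing {G X : Type*} [Mul G] [SMul G X] (A V : Set G) (x : G → X) (y : X)
    (w : G → X) : Prop where
  eq_smul_of_mem : ∀ v ∈ V, ∀ γ ∈ A * ({v} : Set G), w γ = γ • x v
  eq_smul_of_notMem : ∀ γ ∉ A * V, w γ = γ • y

namespace IsOrbitGluing

section Monoid

variable {G X : Type*} [Monoid G] [MulAction G X] {F A V : Set G} {x : G → X} {y : X} {w : G → X}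
  {s g : G}

theorem smul_apply_of_notMem (hw : IsOrbitGluing A V x y w) (hg : g ∉ A * V) (hsg : s * g ∉ A * V) :
    s • w g = w (s * g) := by
  rw [hw.eq_smul_of_notMem _ hg, hw.eq_smul_of_notMem _ hsg, mul_smul]

theorem smul_apply_of_mem (hw : IsOrbitGluing A V x y w) (hV : Separated (F * A) V) (hF1 : 1 ∈ F)
    (hs : s ∈ F) (hg : g ∈ A * V) (hsg : s * g ∈ A * V) : s • w g = w (s * g) := by
  obtain ⟨a, ha, v, hv, rfl⟩ := hg
  obtain ⟨b, hb, u, hu, hbu : b * u = s * (a * v)⟩ := hsg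
  have hbFA : b ∈ F * A := Set.subset_mul_right A hF1 hb
  obtain rfl : u = v :=
    hV.eq_of_mul_eq_mul hbFA (Set.mul_mem_mul hs ha) hu hv (by rw [hbu, mul_assoc])
  rw [← hbu, hw.eq_smul_of_mem u hu _ (Set.mul_mem_mul ha rfl),
    hw.eq_smul_of_mem u hu _ (Set.mul_mem_mul hb rfl), hbu, mul_smul s]

theorem dist_smul_apply_le_of_mem_of_notMem [PseudoMetricSpace X] {η : ℝ}
    (hw : IsOrbitGluing A V x y w)
    (hxy : ∀ v ∈ V, ∀ γ ∈ ((F * A) \ A) * ({v} : Set G), dist (γ • x v) (γ • y) ≤ η)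
    (hs : s ∈ F) (hg : g ∈ A * V) (hsg : s * g ∉ A * V) :
    dist (s • w g) (w (s * g)) ≤ η := by
  obtain ⟨a, ha, v, hv, rfl⟩ := hg
  have hsa : s * a ∉ A := fun h => hsg (mul_assoc s a v ▸ Set.mul_mem_mul h hv)
  have hboundary : s * (a * v) ∈ ((F * A) \ A) * ({v} : Set G) :=
    mul_assoc s a v ▸ Set.mul_mem_mul ⟨Set.mul_mem_mul hs ha, hsa⟩ rfl
  rw [hw.eq_smul_of_mem v hv _ (Set.mul_mem_mul ha rfl), hw.eq_smul_of_notMem _ hsg, ← mul_smul]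
  exact hxy v hv _ hboundary

end Monoid

theorem dist_smul_apply_lt {G X : Type*} [Group G] [PseudoMetricSpace X] [MulAction G X]
    {F A V : Set G} {x : G → X} {y : X} {w : G → X} {δ η : ℝ} (hw : IsOrbitGluing A V x y w)
    (hV : Separated (F * A) V) (hF1 : 1 ∈ F) (hFinv : F⁻¹ = F) (hδ : 0 < δ)
    (hF : ∀ s ∈ F, ∀ p q : X, dist p q ≤ η → dist (s • p) (s • q) < δ)
    (hxy : ∀ v ∈ V, ∀ γ ∈ ((F * A) \ A) * ({v} : Set G), dist (γ • x v) (γ • y) ≤ η)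
    {s : G} (hs : s ∈ F) (g : G) : dist (s • w g) (w (s * g)) < δ := by
  by_cases hg : g ∈ A * V <;> by_cases hsg : s * g ∈ A * V
  · rwa [hw.smul_apply_of_mem hV hF1 hs hg hsg, dist_self]
  · simpa only [one_smul] using
      hF 1 hF1 _ _ (hw.dist_smul_apply_le_of_mem_of_notMem hxy hs hg hsg)
  · have hsinv : s⁻¹ ∈ F := by rwa [← hFinv, Set.inv_mem_inv]
    have hback : dist (s⁻¹ • w (s * g)) (w g) ≤ η := by
      simpa only [inv_mul_cancel_left] using hw.dist_smul_apply_le_of_mem_of_notMem hxy hsinv hsg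
        (by rwa [inv_mul_cancel_left])
    simpa only [smul_inv_smul, dist_comm] using hF s hs _ _ hback
  · rwa [hw.smul_apply_of_notMem hg hsg, dist_self]

end IsOrbitGluing

theorem stmt6_general (G X : Type*) [Group G] [PseudoMetricSpace X] [MulAction G X] (F : Set G)
    (hF : UniformEquicontinuous fun (s : F) (x : X) => (s : G) • x)
    (hF1 : 1 ∈ F) (hFinv : F⁻¹ = F) (δ : ℝ) (hδ : 0 < δ) :
    ∃ η > (0 : ℝ), ∀ A V : Set G, Separated (F * A) V → ∀ (x : G → X) (y : X),
      (∀ v ∈ V, ∀ γ ∈ ((F * A) \ A) * ({v} : Set G), dist (γ • x v) (γ • y) ≤ η) →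
      ∀ w : G → X, IsOrbitGluing A V x y w → ∀ s ∈ F, ∀ g : G, dist (s • w g) (w (s * g)) < δ := by
  obtain ⟨ε, hε, hFε⟩ := Metric.uniformEquicontinuous_iff.1 hF δ hδ
  refine ⟨ε / 2, half_pos hε, fun A V hV x y hxy w hw s hs g => ?_⟩
  exact hw.dist_smul_apply_lt hV hF1 hFinv hδ
    (fun t ht p q hpq => hFε p q (hpq.trans_lt (half_lt_self hε)) ⟨t, ht⟩) hxy hs g

/-- Let `G ↷ X` be an action, `F ⊆ G` finite with `e ∈ F = F⁻¹` and `δ > 0`.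
Then there exists `η > 0` such that for any finite `A ⊆ G`, any `FA`-separated `V ⊆ G`, any
family `(x_v)_{v∈V}` and any `y` satisfying `d_{(FA∖A)v}(x_v,y) ≤ η` for all `v ∈ V`, the
family `(w_γ)` with `w_γ = γ x_v` for `γ ∈ Av` (`v ∈ V`) and `w_γ = γ y` for `γ ∉ AV` is an
`(F,δ)` pseudo-orbit. -/
theorem stmt6 (G X : Type*) [Group G] [Countable G] [Infinite G] [DecidableEq G]
    [MetricSpace X] [CompactSpace X] [MulAction G X]
    (hcont : ∀ g : G, Continuous fun x : X => g • x)
    (F : Finset G) (hF1 : (1 : G) ∈ F) (hFinv : F⁻¹ = F) (δ : ℝ) (hδ : 0 < δ) :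
    ∃ η > (0 : ℝ), ∀ A : Finset G, ∀ V : Set G,
      Separated ((F * A : Finset G) : Set G) V →
      ∀ (xv : G → X) (y : X),
        (∀ v ∈ V, supD ((((F * A : Finset G) : Set G) \ (A : Set G)) * ({v} : Set G))
            (xv v) y ≤ η) →
        ∀ w : G → X,
          (∀ v ∈ V, ∀ γ ∈ (A : Set G) * ({v} : Set G), w γ = γ • xv v) →
          (∀ γ ∉ (A : Set G) * V, w γ = γ • y) →
          IsPseudoOrbit F δ w := by
  have hF : UniformEquicontinuous fun (s : (F : Set G)) (x : X) => (s : G) • x :=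
    uniformEquicontinuous_finite.2 fun s =>
      CompactSpace.uniformContinuous_of_continuous (hcont s)
  obtain ⟨η, hη, h⟩ := stmt6_general G X F hF hF1 (by rw [← Finset.coe_inv, hFinv]) δ hδ
  refine ⟨η, hη, fun A V hV xv y hxy w hA hAV =>
    h A V (by rwa [← Finset.coe_mul]) xv y (fun v hv γ hγ => ?_) w ⟨hA, hAV⟩⟩
  rw [← Finset.coe_mul] at hγ
  have hfin : (((F * A : Finset G) \ A : Set G) * {v}).Finite :=
    (F * A).finite_toSet.sdiff.mul (Set.finite_singleton v)
  exact (le_supOf_of_finite dist hfin hγ (xv v) y).trans (hxy v hv)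
end
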